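/- Let λ=(λ_1,...,λ_l) be a partition of length l and 0 ≤ k ≤ l−1. If α=(α_1,α_2,...) is a multi-index with finitely many nonzero entries and wt α < N_{λ,k}, then the polynomial ∂^α s_λ(t) evaluated at t = [x_1]+⋯+[x_k] is identically zero as a polynomial in x_1,...,x_k (for k=0 this means ∂^α s_λ(0) = 0). -/

import Mathlib

open MvPolynomial

/-- The polynomial `p_n(t)` defined by `exp(Σ_{n≥1} t_n k^n) = Σ_{n≥0} p_n(t) k^n`,
as a polynomial in the variables `t_1, t_2, ...` (variable `X n` stands for `t_n`). -/
noncomputable def pS (n : ℕ) : MvPolynomial ℕ ℚ :=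
  ∑ m ∈ Finset.range (n + 1), (Nat.factorial m : ℚ)⁻¹ •
    ∑ c ∈ Finset.univ.filter
        (fun c : Fin m → Fin (n + 1) =>
          (∑ j, ((c j : ℕ))) = n ∧ ∀ j, 1 ≤ (c j : ℕ)),
      ∏ j, X ((c j : ℕ))

/-- `p_n` for `n : ℤ`, with `p_n = 0` for `n < 0`. -/
noncomputable def pz (n : ℤ) : MvPolynomial ℕ ℚ :=
  if 0 ≤ n then pS n.toNat else 0

/-- The Schur function `s_λ(t) = det(p_{λ_i - i + j})_{1 ≤ i,j ≤ l}` (here `0`-indexed). -/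
noncomputable def schur {l : ℕ} (lam : Fin l → ℕ) : MvPolynomial ℕ ℚ :=
  Matrix.det (Matrix.of fun a b : Fin l =>
    pz ((lam a : ℤ) - ((a : ℕ) : ℤ) + ((b : ℕ) : ℤ)))

/-- Substitution `t_n ↦ (x_1^n + ⋯ + x_k^n)/n`, i.e. `t = [x_1] + ⋯ + [x_k]`. -/
noncomputable def toPowerSums (k : ℕ) (f : MvPolynomial ℕ ℚ) : MvPolynomial (Fin k) ℚ :=
  aeval (fun n : ℕ => (n : ℚ)⁻¹ • ∑ i : Fin k, X i ^ n) f

/-- Iterated partial derivative `∂_{i_1} ⋯ ∂_{i_r}` for a list `L = [i_1, ..., i_r]`. -/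
noncomputable def derivs (L : List ℕ) (f : MvPolynomial ℕ ℚ) : MvPolynomial ℕ ℚ :=
  L.foldr (fun i g => pderiv i g) f

/-- The entries of a partition `λ` padded by zeros (`0`-indexed). -/
def pad {l : ℕ} (lam : Fin l → ℕ) (a : ℕ) : ℕ := if h : a < l then lam ⟨a, h⟩ else 0

/-!
The generating series `H(z) = ∑ p_n z^n = exp (∑ t_n z^n)` satisfies `∂_i H = z^i H`, so `∂_i`
lowers the index of every `p_n` by `i`. Applied to `s_λ = det (p_{m_a + b})` with `m_a = λ_a - a`
(indices from `0`), it thus gives the sum over the rows `a` of the determinants with `m_a` lowered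
by `i`, and `∂^α s_λ` is a sum of determinants `det (p_{m_a - d_a + b})` with `d ≥ 0` and
`∑ d_a = wt α`.

At `t = [x_1] + ⋯ + [x_k]` one has `H(z) ∏ (1 - x_i z) = 1`. Since `∏ (1 - x_i z)` has degree `k`
in `z`, the unitriangular column operations with its coefficients replace every column `b ≥ k` by
`δ_{m_a - d_a + b, 0}`. A nonzero Leibniz term would need a permutation `σ` with
`m_{σ b} - d_{σ b} + b = 0` for all `b ≥ k`; but `m` is decreasing, so by the rearrangement
inequality the sum of these numbers is at least `∑_{b ≥ k} λ_b - wt α > 0`.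
-/

section PowerSeries

variable {R A ι : Type*} [CommRing R] [CommRing A] [Algebra R A]

/-- The derivation of `A⟦z⟧` obtained by applying a derivation of `A` to each coefficient. -/
noncomputable def coeffwiseDerivation (D : Derivation R A A) :
    Derivation R (PowerSeries A) (PowerSeries A) :=
  .mk'
    { toFun := fun f => .mk fun n => D (PowerSeries.coeff n f)
      map_add' := fun f g => by ext; simp
      map_smul' := fun r f => by ext; simp }
    fun f g => by
      ext n
      simp only [LinearMap.coe_mk, AddHom.coe_mk, smul_eq_mul, map_add, PowerSeries.coeff_mk,
        PowerSeries.coeff_mul, map_sum, Derivation.leibniz, Finset.sum_add_distrib]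
      congr 1
      exact (Finset.Nat.sum_antidiagonal_swap
        (f := fun p => PowerSeries.coeff p.1 g * D (PowerSeries.coeff p.2 f)))

@[simp]
theorem coeff_coeffwiseDerivation (D : Derivation R A A) (f : PowerSeries A) (n : ℕ) :
    PowerSeries.coeff n (coeffwiseDerivation D f) = D (PowerSeries.coeff n f) := by
  simp [coeffwiseDerivation]

theorem coeff_pow_eq_sum_fin (f : PowerSeries A) (m n : ℕ) :
    PowerSeries.coeff n (f ^ m) =
      ∑ c : Fin m → Fin (n + 1) with ∑ j, (c j : ℕ) = n, ∏ j, PowerSeries.coeff (c j) f := by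
  rw [← Fin.prod_const, PowerSeries.coeff_prod]
  symm
  refine Finset.sum_nbij (fun c => Finsupp.equivFunOnFinite.symm fun j => (c j : ℕ)) ?_ ?_ ?_ ?_
  · intro c hc
    simpa using hc
  · intro c _ c' _ h
    ext j
    exact DFunLike.congr_fun h j
  · intro d hd
    have hsum : ∑ j, d j = n := by simpa using hd
    have hlt (j : Fin m) : d j < n + 1 :=
      Nat.lt_succ_of_le (hsum ▸ Finset.single_le_sum_of_canonicallyOrdered (Finset.mem_univ j))
    exact ⟨fun j => ⟨d j, hlt j⟩, by simpa using hsum, by ext; rfl⟩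
  · intro c _
    rfl

theorem coeff_pow_eq_zero_of_lt {f : PowerSeries A} (hf : PowerSeries.constantCoeff f = 0)
    {m n : ℕ} (h : n < m) : PowerSeries.coeff n (f ^ m) = 0 :=
  PowerSeries.X_pow_dvd_iff.1 (pow_dvd_pow_of_dvd (PowerSeries.X_dvd_iff.2 hf) m) n h

theorem derivation_prod (D : Derivation R A A) [DecidableEq ι] (s : Finset ι) (f : ι → A) :
    D (∏ i ∈ s, f i) = ∑ a ∈ s, (∏ i ∈ s.erase a, f i) * D (f a) := by
  induction s using Finset.induction_on with
  | empty => simp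
  | insert c s hc ih =>
    rw [Finset.prod_insert hc, Derivation.leibniz, ih, Finset.sum_insert hc,
      Finset.erase_insert hc, smul_eq_mul, smul_eq_mul, Finset.mul_sum, add_comm]
    congr 1
    refine Finset.sum_congr rfl fun a ha => ?_
    have hca : c ≠ a := fun h => hc (h ▸ ha)
    rw [Finset.erase_insert_of_ne hca, Finset.prod_insert (by simp [hc]), mul_assoc]

theorem derivation_det [Fintype ι] [DecidableEq ι] (D : Derivation R A A) (M : Matrix ι ι A) :
    D M.det = ∑ a, (M.updateRow a fun b => D (M a b)).det := by
  simp only [← Matrix.det_transpose M, ← Matrix.det_transpose (M.updateRow _ _),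
    Matrix.det_apply, map_sum]
  rw [Finset.sum_comm]
  refine Finset.sum_congr rfl fun σ _ => ?_
  rw [← Finset.smul_sum, Units.smul_def, map_zsmul, derivation_prod]
  congr 1
  refine Finset.sum_congr rfl fun a ha => ?_
  rw [← Finset.prod_erase_mul _ _ ha]
  congr 1
  · refine Finset.prod_congr rfl fun i hi => ?_
    simp [Matrix.updateRow_ne (Finset.ne_of_mem_erase hi)]
  · simp

theorem coeff_prod_one_sub_eq_zero (s : Finset ι) (x : ι → A) {n : ℕ} (h : s.card < n) :
    PowerSeries.coeff n (∏ i ∈ s, (1 - PowerSeries.C (x i) * PowerSeries.X)) = 0 := by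
  classical
  induction s using Finset.induction_on generalizing n with
  | empty => simp [PowerSeries.coeff_one, (show n ≠ 0 by rintro rfl; simp at h)]
  | insert a s ha ih =>
    rw [Finset.card_insert_of_notMem ha] at h
    obtain ⟨n, rfl⟩ := Nat.exists_eq_add_one_of_ne_zero (Nat.ne_zero_of_lt h)
    rw [Finset.prod_insert ha, sub_mul, one_mul, mul_assoc, map_sub, PowerSeries.coeff_C_mul,
      PowerSeries.coeff_succ_X_mul, ih (by omega), ih (by omega), mul_zero, sub_zero]

theorem one_sub_C_mul_X_mul_mk_pow (x : A) :
    (1 - PowerSeries.C x * PowerSeries.X) * PowerSeries.mk (fun n => x ^ n) = 1 := by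
  ext n
  rw [sub_mul, one_mul, mul_assoc, map_sub, PowerSeries.coeff_C_mul]
  cases n with
  | zero => simp
  | succ n => simp [PowerSeries.coeff_succ_X_mul, PowerSeries.coeff_one, pow_succ']

theorem derivative_prod_one_sub (s : Finset ι) (x : ι → A) :
    PowerSeries.derivative A (∏ i ∈ s, (1 - PowerSeries.C (x i) * PowerSeries.X)) =
      -((∏ i ∈ s, (1 - PowerSeries.C (x i) * PowerSeries.X)) *
        PowerSeries.mk fun n => ∑ i ∈ s, x i ^ (n + 1)) := by
  classical
  have hgeom : (PowerSeries.mk fun n => ∑ i ∈ s, x i ^ (n + 1)) =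
      ∑ i ∈ s, PowerSeries.C (x i) * PowerSeries.mk (fun n => x i ^ n) := by
    ext n
    simp [pow_succ']
  rw [derivation_prod, hgeom, Finset.mul_sum, ← Finset.sum_neg_distrib]
  refine Finset.sum_congr rfl fun a ha => ?_
  have hderiv : PowerSeries.derivative A (1 - PowerSeries.C (x a) * PowerSeries.X) =
      -PowerSeries.C (x a) := by
    simp [Derivation.leibniz]
  rw [hderiv, ← Finset.prod_erase_mul _ _ ha]
  linear_combination PowerSeries.C (x a) *
    (∏ i ∈ s.erase a, (1 - PowerSeries.C (x i) * PowerSeries.X)) *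
      one_sub_C_mul_X_mul_mk_pow (x a)

variable [Algebra ℚ A]

theorem coeff_exp_subst {f : PowerSeries A} (hf : PowerSeries.constantCoeff f = 0) {n N : ℕ}
    (h : n < N) : PowerSeries.coeff n ((PowerSeries.exp A).subst f) =
      ∑ m ∈ Finset.range N, (m.factorial : ℚ)⁻¹ • PowerSeries.coeff n (f ^ m) := by
  rw [PowerSeries.coeff_subst' (PowerSeries.HasSubst.of_constantCoeff_zero' hf),
    finsum_eq_sum_of_support_subset (s := Finset.range N)]
  · refine Finset.sum_congr rfl fun m _ => ?_
    rw [PowerSeries.coeff_exp, smul_eq_mul, ← Algebra.smul_def, one_div]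
  · intro m hm
    by_contra hmN
    rw [Finset.coe_range, Set.mem_Iio, not_lt] at hmN
    exact hm (by simp [coeff_pow_eq_zero_of_lt hf (h.trans_le hmN)])

theorem coeffwiseDerivation_exp_subst (D : Derivation R A A) {f : PowerSeries A}
    (hf : PowerSeries.constantCoeff f = 0) :
    coeffwiseDerivation D ((PowerSeries.exp A).subst f) =
      (PowerSeries.exp A).subst f * coeffwiseDerivation D f := by
  ext n
  have hpow (m : ℕ) : ((m + 1).factorial : ℚ)⁻¹ • D (PowerSeries.coeff n (f ^ (m + 1))) =
      (m.factorial : ℚ)⁻¹ • PowerSeries.coeff n (f ^ m * coeffwiseDerivation D f) := by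
    rw [← coeff_coeffwiseDerivation, Derivation.leibniz_pow, Nat.add_sub_cancel, smul_eq_mul,
      map_nsmul, ← Nat.cast_smul_eq_nsmul ℚ, smul_smul, Nat.factorial_succ, Nat.cast_mul,
      mul_inv_rev, inv_mul_cancel_right₀ (by positivity)]
  have hone : D (PowerSeries.coeff n (1 : PowerSeries A)) = 0 := by
    rw [← coeff_coeffwiseDerivation, Derivation.map_one_eq_zero, map_zero]
  calc PowerSeries.coeff n (coeffwiseDerivation D ((PowerSeries.exp A).subst f))
      = ∑ m ∈ Finset.range (n + 1),
          (m.factorial : ℚ)⁻¹ • PowerSeries.coeff n (f ^ m * coeffwiseDerivation D f) := by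
        rw [coeff_coeffwiseDerivation, coeff_exp_subst hf (show n < n + 1 + 1 by omega), map_sum]
        simp only [map_rat_smul]
        rw [Finset.sum_range_succ', pow_zero, hone, smul_zero, add_zero]
        exact Finset.sum_congr rfl fun m _ => hpow m
    _ = PowerSeries.coeff n ((PowerSeries.exp A).subst f * coeffwiseDerivation D f) := by
        simp only [PowerSeries.coeff_mul, Finset.smul_sum]
        rw [Finset.sum_comm]
        refine Finset.sum_congr rfl fun p hp => ?_
        rw [coeff_exp_subst hf (Nat.lt_succ_of_le (Finset.HasAntidiagonal.antidiagonal.fst_le hp)),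
          Finset.sum_mul]
        simp only [smul_mul_assoc]

theorem exp_subst_sum_pow_mul_prod_one_sub (s : Finset ι) (x : ι → A) :
    (PowerSeries.exp A).subst (PowerSeries.mk fun n => (n : ℚ)⁻¹ • ∑ i ∈ s, x i ^ n) *
      ∏ i ∈ s, (1 - PowerSeries.C (x i) * PowerSeries.X) = 1 := by
  have : IsAddTorsionFree A := .of_module_rat A
  set p := PowerSeries.mk fun n => (n : ℚ)⁻¹ • ∑ i ∈ s, x i ^ n with hp
  -- The summand `n = 0` vanishes because `(0 : ℚ)⁻¹ = 0`.
  have hconst : PowerSeries.constantCoeff p = 0 := by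
    simp [hp, ← PowerSeries.coeff_zero_eq_constantCoeff_apply]
  have hderiv : PowerSeries.derivative A p = PowerSeries.mk fun n => ∑ i ∈ s, x i ^ (n + 1) := by
    ext n
    have hne : ((n + 1 : ℕ) : ℚ) ≠ 0 := by positivity
    rw [PowerSeries.coeff_derivative, hp, PowerSeries.coeff_mk, PowerSeries.coeff_mk,
      ← Nat.cast_succ, mul_comm, ← nsmul_eq_mul, ← Nat.cast_smul_eq_nsmul ℚ, smul_smul,
      mul_inv_cancel₀ hne, one_smul]
  apply PowerSeries.derivative.ext
  · rw [Derivation.leibniz, derivative_prod_one_sub, PowerSeries.derivative_subst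
      (PowerSeries.HasSubst.of_constantCoeff_zero' hconst), PowerSeries.derivative_exp, hderiv,
      PowerSeries.derivative_one, smul_eq_mul, smul_eq_mul]
    ring
  · have hexp : PowerSeries.constantCoeff ((PowerSeries.exp A).subst p) = 1 := by
      rw [← PowerSeries.coeff_zero_eq_constantCoeff_apply, coeff_exp_subst hconst one_pos]
      simp
    rw [map_mul, hexp, map_prod]
    simp

end PowerSeries

/-- The power series `∑_{n ≥ 1} t_n z^n`. -/
noncomputable def timeSeries : PowerSeries (MvPolynomial ℕ ℚ) :=
  .mk fun n => if n = 0 then 0 else X n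

theorem constantCoeff_timeSeries : PowerSeries.constantCoeff timeSeries = 0 := by
  simp [timeSeries, ← PowerSeries.coeff_zero_eq_constantCoeff_apply]

theorem mk_pS_eq_exp_subst :
    PowerSeries.mk pS = (PowerSeries.exp (MvPolynomial ℕ ℚ)).subst timeSeries := by
  ext1 n
  rw [PowerSeries.coeff_mk, coeff_exp_subst constantCoeff_timeSeries (Nat.lt_succ_self n), pS]
  refine Finset.sum_congr rfl fun m _ => ?_
  rw [coeff_pow_eq_sum_fin, ← Finset.filter_filter, Finset.sum_filter]
  congr 1
  refine Finset.sum_congr rfl fun c _ => ?_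
  simp only [timeSeries, PowerSeries.coeff_mk]
  split_ifs with hc
  · exact Finset.prod_congr rfl fun j _ => (if_neg (Nat.one_le_iff_ne_zero.1 (hc j))).symm
  · push Not at hc
    obtain ⟨j, hj⟩ := hc
    refine (Finset.prod_eq_zero (Finset.mem_univ j) ?_).symm
    exact if_pos (Nat.lt_one_iff.1 hj)

theorem coeffwiseDerivation_pderiv_timeSeries {i : ℕ} (hi : 1 ≤ i) :
    coeffwiseDerivation (pderiv i) timeSeries = PowerSeries.X ^ i := by
  ext1 n
  rw [coeff_coeffwiseDerivation, timeSeries, PowerSeries.coeff_mk, PowerSeries.coeff_X_pow]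
  split_ifs with h0 h h
  · omega
  · simp
  · rw [h, pderiv_X_self]
  · rw [pderiv_X_of_ne h]

theorem pderiv_pS {i : ℕ} (hi : 1 ≤ i) (n : ℕ) :
    pderiv i (pS n) = if i ≤ n then pS (n - i) else 0 := by
  have h := coeffwiseDerivation_exp_subst (pderiv i) constantCoeff_timeSeries
  rw [coeffwiseDerivation_pderiv_timeSeries hi, ← mk_pS_eq_exp_subst] at h
  simpa [PowerSeries.coeff_mul_X_pow'] using congrArg (PowerSeries.coeff n) h

theorem pz_natCast (n : ℕ) : pz n = pS n := by simp [pz]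

theorem pz_of_neg {n : ℤ} (h : n < 0) : pz n = 0 := if_neg h.not_ge

theorem pderiv_pz {i : ℕ} (hi : 1 ≤ i) (n : ℤ) : pderiv i (pz n) = pz (n - i) := by
  rcases lt_or_ge n 0 with h | h
  · rw [pz_of_neg h, pz_of_neg (by omega), map_zero]
  · lift n to ℕ using h
    rw [pz_natCast, pderiv_pS hi]
    split_ifs with hin
    · rw [← Nat.cast_sub hin, pz_natCast]
    · rw [pz_of_neg (by omega)]

/-- The substitution `t = [x_1] + ⋯ + [x_k]` of `toPowerSums`, as an algebra homomorphism. -/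
noncomputable def powerSumHom (k : ℕ) : MvPolynomial ℕ ℚ →ₐ[ℚ] MvPolynomial (Fin k) ℚ :=
  aeval fun n : ℕ => (n : ℚ)⁻¹ • ∑ i : Fin k, X i ^ n

/-- The generating series `∏ (1 - x_i z)` of the signed elementary symmetric polynomials. -/
noncomputable def esymmSeries (k : ℕ) : PowerSeries (MvPolynomial (Fin k) ℚ) :=
  ∏ i : Fin k, (1 - PowerSeries.C (X i) * PowerSeries.X)

theorem coeff_zero_esymmSeries (k : ℕ) : PowerSeries.coeff 0 (esymmSeries k) = 1 := by
  simp [esymmSeries, map_prod]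

theorem coeff_esymmSeries_eq_zero {k n : ℕ} (h : k < n) :
    PowerSeries.coeff n (esymmSeries k) = 0 :=
  coeff_prod_one_sub_eq_zero _ _ (by simpa using h)

theorem mk_powerSumHom_pS_mul_esymmSeries (k : ℕ) :
    PowerSeries.mk (fun n => powerSumHom k (pS n)) * esymmSeries k = 1 := by
  let φ : MvPolynomial ℕ ℚ →+* MvPolynomial (Fin k) ℚ := powerSumHom k
  have hmk : PowerSeries.mk (fun n => powerSumHom k (pS n)) =
      PowerSeries.map φ (PowerSeries.mk pS) := by
    ext1 n
    simp [φ]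
  have htime : PowerSeries.map φ timeSeries =
      PowerSeries.mk fun n => (n : ℚ)⁻¹ • ∑ i : Fin k, X i ^ n := by
    ext1 n
    rcases eq_or_ne n 0 with rfl | hn
    · simp [timeSeries]
    · simp [timeSeries, φ, powerSumHom, hn]
  have hsubst : PowerSeries.map φ ((PowerSeries.exp _).subst timeSeries) =
      (PowerSeries.map φ (PowerSeries.exp _)).subst (PowerSeries.map φ timeSeries) :=
    PowerSeries.map_subst (PowerSeries.HasSubst.of_constantCoeff_zero' constantCoeff_timeSeries) _
  rw [hmk, mk_pS_eq_exp_subst, hsubst, PowerSeries.map_exp, htime]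
  exact exp_subst_sum_pow_mul_prod_one_sub Finset.univ X

theorem sum_coeff_esymmSeries_mul_powerSumHom_pz {k N : ℕ} (hN : k < N) (n : ℤ) :
    ∑ j ∈ Finset.range N, PowerSeries.coeff j (esymmSeries k) * powerSumHom k (pz (n - j)) =
      if n = 0 then 1 else 0 := by
  rcases lt_or_ge n 0 with h | h
  · rw [if_neg h.ne]
    exact Finset.sum_eq_zero fun j _ => by rw [pz_of_neg (by omega), map_zero, mul_zero]
  lift n to ℕ using h
  let g : ℕ → MvPolynomial (Fin k) ℚ := fun j =>
    PowerSeries.coeff j (esymmSeries k) * powerSumHom k (pz (n - j))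
  have hg_large (j : ℕ) (hj : N ≤ j) : g j = 0 := by
    simp only [g, coeff_esymmSeries_eq_zero (hN.trans_le hj), zero_mul]
  have hg_neg (j : ℕ) (hj : n + 1 ≤ j) : g j = 0 := by
    simp only [g, pz_of_neg (show (n : ℤ) - j < 0 by omega), map_zero, mul_zero]
  calc ∑ j ∈ Finset.range N, g j = ∑ j ∈ Finset.range (n + 1), g j := by
        rcases le_total N (n + 1) with hle | hle
        · exact (Finset.eventually_constant_sum hg_large hle).symm
        · exact Finset.eventually_constant_sum hg_neg hle
    _ = PowerSeries.coeff n
          (esymmSeries k * PowerSeries.mk fun n => powerSumHom k (pS n)) := by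
        rw [PowerSeries.coeff_mul, Finset.Nat.sum_antidiagonal_eq_sum_range_succ_mk]
        refine Finset.sum_congr rfl fun j hj => ?_
        have hjn : j ≤ n := Finset.mem_range_succ_iff.1 hj
        simp only [g, PowerSeries.coeff_mk, ← Nat.cast_sub hjn, pz_natCast]
    _ = if (n : ℤ) = 0 then 1 else 0 := by
        rw [mul_comm, mk_powerSumHom_pS_mul_esymmSeries, PowerSeries.coeff_one]
        simp only [Nat.cast_eq_zero]

/-- The determinant `det(p_{m_a + b})`, so that `schur lam` is the case `m_a = lam_a - a`; lowering
an entry of `m` amounts to differentiating the corresponding row. -/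
noncomputable def shiftDet {l : ℕ} (m : Fin l → ℤ) : MvPolynomial ℕ ℚ :=
  Matrix.det (Matrix.of fun a b : Fin l => pz (m a + (b : ℕ)))

theorem pderiv_shiftDet {l i : ℕ} (hi : 1 ≤ i) (m : Fin l → ℤ) :
    pderiv i (shiftDet m) = ∑ a, shiftDet (m - Pi.single a (i : ℤ)) := by
  rw [shiftDet, derivation_det]
  refine Finset.sum_congr rfl fun a _ => congrArg Matrix.det ?_
  ext1 c b
  rcases eq_or_ne c a with rfl | hca
  · simp [pderiv_pz hi, sub_add_eq_add_sub]
  · simp [Matrix.updateRow_ne hca, Pi.single_eq_of_ne hca]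

theorem derivs_shiftDet_mem_span {l : ℕ} {L : List ℕ} (hL : ∀ i ∈ L, 1 ≤ i) (m : Fin l → ℤ) :
    derivs L (shiftDet m) ∈
      Submodule.span ℚ ((fun d => shiftDet (m - d)) '' {d | 0 ≤ d ∧ ∑ a, d a = (L.sum : ℤ)}) := by
  induction L with
  | nil => exact Submodule.subset_span ⟨0, by simp, by simp [derivs]⟩
  | cons i L ih =>
    obtain ⟨hi, hL⟩ := List.forall_mem_cons.1 hL
    change derivs L (shiftDet m) ∈ Submodule.comap (pderiv i).toLinearMap (Submodule.span ℚ _)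
    refine Submodule.span_le.2 ?_ (ih hL)
    rintro _ ⟨d, ⟨hd, hsum⟩, rfl⟩
    change pderiv i (shiftDet (m - d)) ∈ Submodule.span ℚ _
    rw [pderiv_shiftDet hi]
    refine Submodule.sum_mem _ fun a _ => Submodule.subset_span ⟨d + Pi.single a (i : ℤ), ?_, ?_⟩
    · refine ⟨add_nonneg hd (Pi.single_nonneg.2 (by positivity)), ?_⟩
      simp [Finset.sum_add_distrib, hsum, add_comm]
    · simp only [sub_sub]

theorem sum_fin_powerSumHom_pz_mul_coeff_esymmSeries {k l : ℕ} {b : Fin l} (hb : k ≤ b) (n : ℤ) :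
    ∑ c : Fin l, powerSumHom k (pz (n + (c : ℕ))) *
        (if c ≤ b then PowerSeries.coeff (b - c) (esymmSeries k) else 0) =
      if n + (b : ℕ) = 0 then 1 else 0 := by
  let g : ℕ → MvPolynomial (Fin k) ℚ := fun c =>
    powerSumHom k (pz (n + c)) * PowerSeries.coeff (b - c) (esymmSeries k)
  calc ∑ c : Fin l, powerSumHom k (pz (n + (c : ℕ))) *
        (if c ≤ b then PowerSeries.coeff (b - c) (esymmSeries k) else 0)
      = ∑ c ∈ Finset.Iic b, g c := by
        simp only [mul_ite, mul_zero, ← Finset.sum_filter, Finset.filter_ge_eq_Iic, g]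
    _ = ∑ c ∈ Finset.range (b + 1), g c := by
        rw [Nat.range_succ_eq_Iic, ← Fin.map_valEmbedding_Iic, Finset.sum_map]
        rfl
    _ = ∑ j ∈ Finset.range (b + 1),
          PowerSeries.coeff j (esymmSeries k) * powerSumHom k (pz (n + (b : ℕ) - j)) := by
        rw [← Finset.sum_range_reflect]
        refine Finset.sum_congr rfl fun j hj => ?_
        have hjb : j ≤ b := Finset.mem_range_succ_iff.1 hj
        simp only [g, Nat.add_sub_cancel, Nat.sub_sub_self hjb, Nat.cast_sub hjb, add_sub_assoc,
          mul_comm]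
    _ = if n + (b : ℕ) = 0 then 1 else 0 :=
        sum_coeff_esymmSeries_mul_powerSumHom_pz (Nat.lt_succ_of_le hb) _

theorem powerSumHom_shiftDet_eq_zero {k l : ℕ} {m : Fin l → ℤ}
    (h : ∀ σ : Equiv.Perm (Fin l), ∃ b : Fin l, k ≤ b ∧ m (σ b) + (b : ℕ) ≠ 0) :
    powerSumHom k (shiftDet m) = 0 := by
  let M : Matrix (Fin l) (Fin l) (MvPolynomial (Fin k) ℚ) :=
    .of fun a b => powerSumHom k (pz (m a + (b : ℕ)))
  let U : Matrix (Fin l) (Fin l) (MvPolynomial (Fin k) ℚ) :=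
    .of fun c b => if c ≤ b then PowerSeries.coeff (b - c) (esymmSeries k) else 0
  have hU_tri : U.IsUpperTriangular := fun c b (hbc : b < c) => if_neg hbc.not_ge
  have hU : U.det = 1 := by
    rw [Matrix.det_of_isUpperTriangular hU_tri]
    simp [U, coeff_zero_esymmSeries]
  have hMU (a b : Fin l) (hb : k ≤ b) : (M * U) a b = if m a + (b : ℕ) = 0 then 1 else 0 :=
    sum_fin_powerSumHom_pz_mul_coeff_esymmSeries hb (m a)
  have hM : powerSumHom k (shiftDet m) = (M * U).det := by
    rw [Matrix.det_mul, hU, mul_one, shiftDet, AlgHom.map_det]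
    rfl
  rw [hM, Matrix.det_apply]
  refine Finset.sum_eq_zero fun σ _ => ?_
  obtain ⟨b, hb, hne⟩ := h σ
  rw [Finset.prod_eq_zero (Finset.mem_univ b) (by rw [hMU _ _ hb, if_neg hne]), smul_zero]

theorem sum_le_sum_comp_perm_of_isUpperSet {ι G : Type*} [LinearOrder ι] [Finite ι]
    [AddCommGroup G] [LinearOrder G] [IsOrderedAddMonoid G] {f : ι → G} (hf : Antitone f)
    {s : Finset ι} (hs : IsUpperSet (s : Set ι)) (σ : Equiv.Perm ι) :
    ∑ i ∈ s, f i ≤ ∑ i ∈ s, f (σ i) := by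
  have := Fintype.ofFinite ι
  have hs' : Monotone fun i => if i ∈ s then (1 : ℤ) else 0 := by
    intro i j hij
    have hmem : i ∈ s → j ∈ s := fun hi => hs hij hi
    dsimp only
    split_ifs <;> simp_all
  simpa using (hs'.antivary hf).sum_smul_le_sum_smul_comp_perm (σ := σ)

theorem exists_sub_comp_perm_add_ne_zero {ι G : Type*} [LinearOrder ι] [Fintype ι]
    [AddCommGroup G] [LinearOrder G] [IsOrderedAddMonoid G] {f d w : ι → G} (hf : Antitone f)
    (hd : 0 ≤ d) {s : Finset ι} (hs : IsUpperSet (s : Set ι))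
    (h : ∑ i, d i < ∑ i ∈ s, (f i + w i)) (σ : Equiv.Perm ι) :
    ∃ i ∈ s, (f - d) (σ i) + w i ≠ 0 := by
  refine Finset.exists_ne_zero_of_sum_ne_zero (ne_of_gt ?_)
  have hfσ := sum_le_sum_comp_perm_of_isUpperSet hf hs σ
  have hdσ : ∑ i ∈ s, d (σ i) ≤ ∑ i, d i :=
    calc ∑ i ∈ s, d (σ i) ≤ ∑ i, d (σ i) :=
          Finset.sum_le_univ_sum_of_nonneg fun i => hd (σ i)
      _ = ∑ i, d i := Equiv.sum_comp σ d
  calc 0 < ∑ i ∈ s, (f i + w i) - ∑ i, d i := sub_pos.2 h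
    _ = ∑ i ∈ s, f i - ∑ i, d i + ∑ i ∈ s, w i := by rw [Finset.sum_add_distrib]; abel
    _ ≤ ∑ i ∈ s, f (σ i) - ∑ i ∈ s, d (σ i) + ∑ i ∈ s, w i := by gcongr
    _ = ∑ i ∈ s, ((f - d) (σ i) + w i) := by
      simp only [Pi.sub_apply, Finset.sum_add_distrib, Finset.sum_sub_distrib]

theorem sum_Ico_pad {k l : ℕ} (hk : k < l) (lam : Fin l → ℕ) :
    ∑ a ∈ Finset.Ico k l, pad lam a = ∑ b ∈ Finset.Ici (⟨k, hk⟩ : Fin l), lam b := by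
  rw [← Fin.map_valEmbedding_Ici ⟨k, hk⟩, Finset.sum_map]
  simp [pad]

theorem antitone_sub_val {l : ℕ} {lam : Fin l → ℕ} (hanti : Antitone lam) :
    Antitone fun a : Fin l => (lam a : ℤ) - (a : ℕ) := fun a b hab => by
  have hlam := hanti hab
  dsimp only
  omega

/-- Let `λ` be a partition of length `l` and `0 ≤ k ≤ l-1`. For any
multi-index `α` (encoded as the list `L` of indices of the derivatives `∂_{i}`, taken with
multiplicity, so that `wt α = L.sum`) with `wt α < N_{λ,k} = λ_{k+1}+⋯+λ_l`, the polynomial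
`∂^α s_λ(t)` evaluated at `t = [x_1]+⋯+[x_k]` vanishes identically. -/
theorem statement5 (l : ℕ) (lam : Fin l → ℕ)
    (hanti : Antitone lam) (hpos : ∀ i, 1 ≤ lam i)
    (k : ℕ) (hk : k + 1 ≤ l)
    (L : List ℕ) (hL : ∀ i ∈ L, 1 ≤ i)
    (hwt : L.sum < ∑ a ∈ Finset.Ico k l, pad lam a) :
    toPowerSums k (derivs L (schur lam)) = 0 := by
  let f : Fin l → ℤ := fun a => (lam a : ℤ) - (a : ℕ)
  change powerSumHom k (derivs L (shiftDet f)) = 0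
  refine (Submodule.span_le (p := LinearMap.ker (powerSumHom k).toLinearMap)).2 ?_
    (derivs_shiftDet_mem_span hL f)
  rintro _ ⟨d, ⟨hd, hsum⟩, rfl⟩
  refine powerSumHom_shiftDet_eq_zero fun σ => ?_
  have hlt : ∑ a, d a < ∑ b ∈ Finset.Ici (⟨k, hk⟩ : Fin l), (f b + (b : ℕ)) := by
    rw [hsum]
    simp only [f, sub_add_cancel]
    exact_mod_cast sum_Ico_pad hk lam ▸ hwt
  obtain ⟨b, hb, hne⟩ := exists_sub_comp_perm_add_ne_zero (antitone_sub_val hanti) hd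
    (by simpa using isUpperSet_Ici _) hlt σ
  exact ⟨b, Fin.le_def.1 (Finset.mem_Ici.1 hb), hne⟩
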